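/- arXiv:1203.5323 — 2 statements merged into one kernel-verified Lean document; each statement's English description precedes it below -/
import Mathlib

section
/- Let Θ'_{m,k} be the 3-CNF obtained from Θ_{m,k} by the standard nondeterministic extension (replacing each clause v^1_i∨⋯∨v^m_i by the clauses (v^1_i∨v^2_i∨¬z^1_i), (z^1_i∨v^3_i∨¬z^2_i), …, (z^{m-4}_i∨v^{m-2}_i∨¬z^{m-3}_i), (z^{m-3}_i∨v^{m-1}_i∨v^m_i) with new variables z^1_i,…,z^{m-3}_i). Then (Θ'_{m,k}, k) admits a W[1]-parameterized tree-Resolution refutation of size at most 7^{k+1}. -/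
/-- A clause is a finite set of literals; a literal is a pair (variable, polarity). -/
abbrev Clause (V : Type) := Finset (V × Bool)

/-- An assignment satisfies a clause if it makes some literal of the clause true. -/
def satClause {V : Type} (α : V → Bool) (C : Clause V) : Prop :=
  ∃ l ∈ C, α l.1 = l.2

/-- An assignment satisfies a CNF (a set of clauses) if it satisfies every clause. -/
def satCNF {V : Type} (α : V → Bool) (F : Set (Clause V)) : Prop :=
  ∀ C ∈ F, satClause α C

/-- A Resolution refutation of a set `F` of clauses: a finite sequence of clauses ending in
the empty clause, each clause being an axiom of `F`, a resolvent of two earlier clauses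
(from `P ∨ x` and `Q ∨ ¬x` derive `P ∨ Q`), or a weakening of an earlier clause
(from `P` derive `P ∨ l`). Its size is the length of the sequence. -/
structure ResRefutation {V : Type} [DecidableEq V] (F : Set (Clause V)) where
  seq : List (Clause V)
  ne : seq ≠ []
  lastEmpty : seq.getLast ne = (∅ : Clause V)
  valid : ∀ i (hi : i < seq.length),
    (seq[i]'hi ∈ F) ∨
    (∃ (j l : ℕ) (hj : j < i) (hl : l < i) (x : V) (P Q : Clause V),
      seq[j]'(hj.trans hi) = insert (x, true) P ∧
      seq[l]'(hl.trans hi) = insert (x, false) Q ∧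
      seq[i]'hi = P ∪ Q) ∨
    (∃ (j : ℕ) (hj : j < i) (lit : V × Bool),
      seq[i]'hi = insert lit (seq[j]'(hj.trans hi)))

/-- The size of a Resolution refutation: the length of its sequence of clauses. -/
def ResRefutation.size {V : Type} [DecidableEq V] {F : Set (Clause V)}
    (π : ResRefutation F) : ℕ :=
  π.seq.length

/-- Tree-Resolution derivations from the clause set `F`: each clause occurrence is used as a
premise of at most one inference. A tree-Resolution refutation of `F` is a `ResTree F ∅`. -/
inductive ResTree {V : Type} [DecidableEq V] (F : Set (Clause V)) : Clause V → Type where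
  | ax (C : Clause V) (h : C ∈ F) : ResTree F C
  | res (x : V) (P Q : Clause V) (t₁ : ResTree F (insert (x, true) P))
      (t₂ : ResTree F (insert (x, false) Q)) : ResTree F (P ∪ Q)
  | weak (l : V × Bool) (C : Clause V) (t : ResTree F C) : ResTree F (insert l C)

/-- The size of a tree-Resolution derivation: its number of clause occurrences. -/
def ResTree.size {V : Type} [DecidableEq V] {F : Set (Clause V)} :
    ∀ {C : Clause V}, ResTree F C → ℕ
  | _, .ax _ _ => 1
  | _, .res _ _ _ t₁ t₂ => t₁.size + t₂.size + 1
  | _, .weak _ _ t => t.size + 1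

/-- The clauses `¬x_{i₁} ∨ ⋯ ∨ ¬x_{i_{k+1}}` over the variables in `Vars`. -/
def negClausesOn {V : Type} [DecidableEq V] (Vars : Finset V) (k : ℕ) : Set (Clause V) :=
  {C | ∃ S : Finset V, S ⊆ Vars ∧ S.card = k + 1 ∧ C = S.image (fun v => (v, false))}

/-- The clauses `x_{i₁} ∨ ⋯ ∨ x_{i_{n-k+1}}` over the `n` variables in `Vars`. -/
def posClausesOn {V : Type} [DecidableEq V] (Vars : Finset V) (k : ℕ) : Set (Clause V) :=
  {C | ∃ S : Finset V, S ⊆ Vars ∧ S.card = Vars.card - k + 1 ∧ C = S.image (fun v => (v, true))}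

/-- The weight of an assignment: the number of the `n` variables set to true. -/
def weight (n : ℕ) (α : ℕ → Bool) : ℕ :=
  ((Finset.range n).filter (fun i => α i = true)).card
/-- `Θ_{m,k}`: the CNF in the `n = m(k+1)` variables `v^j_i = m*i + j` (`i < k+1`, `j < m`),
with the `k+1` clauses `v^1_i ∨ ⋯ ∨ v^m_i`. -/
def Theta (m k : ℕ) : Set (Clause ℕ) :=
  {C | ∃ i, i < k + 1 ∧ C = (Finset.range m).image (fun j => (m * i + j, true))}

/-- `Γ_Θ`: the `m^{k+1}` clauses `¬v^{a_1}_1 ∨ ⋯ ∨ ¬v^{a_{k+1}}_{k+1}` with `a_i ∈ [m]`. -/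
def GammaTheta (m k : ℕ) : Set (Clause ℕ) :=
  {C | ∃ a : ℕ → ℕ, (∀ i, i < k + 1 → a i < m) ∧
    C = (Finset.range (k + 1)).image (fun i => (m * i + a i, false))}

/-- `Ψ_{n,k}` (for `n` even): the CNF in variables `v_0, …, v_{n-1}` with clauses
`v_{2i} ∨ ¬v_{2i+1}` and `v_{2i+1} ∨ ¬v_{2i}` (i.e. `v_{2i} ↔ v_{2i+1}`). -/
def Psi (n : ℕ) : Set (Clause ℕ) :=
  {C | ∃ i, 2 * i + 1 < n ∧
    (C = {(2 * i, true), (2 * i + 1, false)} ∨ C = {(2 * i + 1, true), (2 * i, false)})}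

/-- `Γ_Ψ` (for `k` odd): the `binom(n/2, (k+1)/2)` clauses
`¬v_{2a_1} ∨ ¬v_{2a_1+1} ∨ ⋯ ∨ ¬v_{2a_{(k+1)/2}} ∨ ¬v_{2a_{(k+1)/2}+1}` over sets `A` of
`(k+1)/2` pairs. -/
def GammaPsi (n k : ℕ) : Set (Clause ℕ) :=
  {C | ∃ A : Finset ℕ, A ⊆ Finset.range (n / 2) ∧ A.card = (k + 1) / 2 ∧
    C = (A.biUnion (fun a => ({2 * a, 2 * a + 1} : Finset ℕ))).image (fun v => (v, false))}

/-- The variable `v^j_i` of `Θ'_{m,k}` (as for `Θ_{m,k}`, encoded as `m*i + j`). -/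
def vvar (m i j : ℕ) : ℕ ⊕ ℕ := Sum.inl (m * i + j)

/-- The extension variable `z^t_i` of `Θ'_{m,k}` (`i < k+1`, `t < m-3`). -/
def zvar (m i t : ℕ) : ℕ ⊕ ℕ := Sum.inr (m * i + t)

/-- `Θ'_{m,k}` (for `m ≥ 3`): the 3-CNF obtained from `Θ_{m,k}` by the standard
nondeterministic extension, replacing each clause `v^1_i ∨ ⋯ ∨ v^m_i` by the clauses
`(v^1_i ∨ v^2_i ∨ ¬z^1_i)`, `(z^1_i ∨ v^3_i ∨ ¬z^2_i)`, …,
`(z^{m-4}_i ∨ v^{m-2}_i ∨ ¬z^{m-3}_i)`, `(z^{m-3}_i ∨ v^{m-1}_i ∨ v^m_i)`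
with new variables `z^1_i, …, z^{m-3}_i` (indices here are 0-based; for each `i` there
are `m-2` clauses indexed by `t < m-2`). -/
def ThetaPrime (m k : ℕ) : Set (Clause (ℕ ⊕ ℕ)) :=
  {C | ∃ i t, i < k + 1 ∧ t < m - 2 ∧
    C = (if t = 0 then ({(vvar m i 0, true), (vvar m i 1, true)} : Clause (ℕ ⊕ ℕ))
           else {(zvar m i (t - 1), true), (vvar m i (t + 1), true)}) ∪
        (if t = m - 3 then ({(vvar m i (m - 1), true)} : Clause (ℕ ⊕ ℕ))
           else {(zvar m i t, false)})}

/-- The variables of `Θ'_{m,k}`: the `m(k+1)` variables `v^j_i` and the `(m-3)(k+1)`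
extension variables `z^t_i`. -/
def thetaPrimeVars (m k : ℕ) : Finset (ℕ ⊕ ℕ) :=
  ((Finset.range (m * (k + 1))).image Sum.inl) ∪
  (((Finset.range (k + 1)) ×ˢ (Finset.range (m - 3))).image (fun p => Sum.inr (m * p.1 + p.2)))

theorem resTree_step {V : Type} [DecidableEq V] {F : Set (Clause V)} (a b c : V) (N : Clause V)
    (n : ℕ) (hn : 1 ≤ n)
    (hF : ({(a, true), (b, true), (c, true)} : Clause V) ∈ F)
    (ha : ∃ t : ResTree F (insert (a, false) N), t.size ≤ n)
    (hb : ∃ t : ResTree F (insert (b, false) N), t.size ≤ n)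
    (hc : ∃ t : ResTree F (insert (c, false) N), t.size ≤ n) :
    ∃ t : ResTree F N, t.size ≤ 7 * n := by
  obtain ⟨ta, ha⟩ := ha
  obtain ⟨tb, hb⟩ := hb
  obtain ⟨tc, hc⟩ := hc
  have h1 : ∃ t : ResTree F (insert (b, true) (insert (c, true) N)), t.size ≤ n + 2 := by
    have e : (insert (b, true) (insert (c, true) N) : Clause V)
        = ({(b, true), (c, true)} : Clause V) ∪ N := by
      ext x; simp
    rw [e]
    refine ⟨.res a _ _ (.ax _ hF) ta, ?_⟩
    simp only [ResTree.size]; omega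
  obtain ⟨t1, h1⟩ := h1
  have h2 : ∃ t : ResTree F (insert (c, true) N), t.size ≤ 2 * n + 3 := by
    have e : (insert (c, true) N : Clause V) = insert (c, true) N ∪ N := by
      ext x; simp
    rw [e]
    refine ⟨.res b _ _ t1 tb, ?_⟩
    simp only [ResTree.size]; omega
  obtain ⟨t2, h2⟩ := h2
  have e : N = N ∪ N := by simp
  rw [e]
  refine ⟨.res c _ _ t2 tc, ?_⟩
  simp only [ResTree.size]; omega

theorem resTree_blocks {V : Type} [DecidableEq V] {F : Set (Clause V)} (Vars : Finset V) (k : ℕ)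
    (a b c : ℕ → V) (blk : V → ℕ)
    (hneg : negClausesOn Vars k ⊆ F)
    (hF : ∀ i < k + 1, ({(a i, true), (b i, true), (c i, true)} : Clause V) ∈ F)
    (ha : ∀ i < k + 1, a i ∈ Vars ∧ blk (a i) = i)
    (hb : ∀ i < k + 1, b i ∈ Vars ∧ blk (b i) = i)
    (hc : ∀ i < k + 1, c i ∈ Vars ∧ blk (c i) = i) (j : ℕ) :
    ∀ S : Finset V, S ⊆ Vars → S.card + j = k + 1 → (∀ s ∈ S, j ≤ blk s) →
      ∃ t : ResTree F (S.image (fun v => (v, false))), t.size ≤ 7 ^ j := by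
  induction j with
  | zero =>
    intro S hS hcard _
    exact ⟨.ax _ (hneg ⟨S, hS, by omega, rfl⟩), by simp [ResTree.size]⟩
  | succ j ih =>
    intro S hS hcard hblk
    have hj : j < k + 1 := by omega
    have key : ∀ x, x ∈ Vars ∧ blk x = j →
        ∃ t : ResTree F (insert (x, false) (S.image (fun v => (v, false)))), t.size ≤ 7 ^ j := by
      rintro x ⟨hx, hxb⟩
      have hxS : x ∉ S := fun h => by have := hblk x h; omega
      have := ih (insert x S) (Finset.insert_subset hx hS)
        (by rw [Finset.card_insert_of_notMem hxS]; omega)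
        (by
          intro s hs
          rcases Finset.mem_insert.1 hs with rfl | hs
          · omega
          · have := hblk s hs; omega)
      rwa [Finset.image_insert] at this
    rw [pow_succ, mul_comm]
    exact resTree_step (a j) (b j) (c j) _ _ (Nat.one_le_pow _ _ (by norm_num)) (hF j hj)
      (key _ (ha j hj)) (key _ (hb j hj)) (key _ (hc j hj))

theorem vvar_good (m k i j : ℕ) (hi : i < k + 1) (hj : j < m) :
    vvar m i j ∈ thetaPrimeVars m k ∧
      Sum.elim (fun x => x / m) (fun x => x / m) (vvar m i j) = i := by
  constructor
  · simp only [thetaPrimeVars, vvar, Finset.mem_union, Finset.mem_image, Finset.mem_range]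
    refine Or.inl ⟨_, ?_, rfl⟩
    have : m * (i + 1) ≤ m * (k + 1) := Nat.mul_le_mul_left _ hi
    rw [Nat.mul_add, Nat.mul_one] at this
    omega
  · simp only [vvar, Sum.elim_inl]
    rw [Nat.mul_add_div (by omega), Nat.div_eq_of_lt hj, Nat.add_zero]

theorem zvar_good (m k i j : ℕ) (hi : i < k + 1) (hj : j < m - 3) :
    zvar m i j ∈ thetaPrimeVars m k ∧
      Sum.elim (fun x => x / m) (fun x => x / m) (zvar m i j) = i := by
  constructor
  · simp only [thetaPrimeVars, zvar, Finset.mem_union, Finset.mem_image]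
    exact Or.inr ⟨(i, j), by simp [hj]; omega, rfl⟩
  · simp only [zvar, Sum.elim_inr]
    rw [Nat.mul_add_div (by omega), Nat.div_eq_of_lt (by omega), Nat.add_zero]

/-- `(Θ'_{m,k}, k)` admits a `W[1]`-parameterized tree-Resolution
refutation — i.e. a tree-Resolution refutation of `Θ'_{m,k}` together with all clauses
`¬x_{i₁} ∨ ⋯ ∨ ¬x_{i_{k+1}}` and all clauses `x_{i₁} ∨ ⋯ ∨ x_{i_{n'-k+1}}` over its `n'`
variables — of size at most `7^(k+1)`. -/
theorem thetaPrime_W1_tree_upper_bound (m k : ℕ) (hm : 3 ≤ m) :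
    ∃ t : ResTree (ThetaPrime m k ∪ negClausesOn (thetaPrimeVars m k) k ∪
        posClausesOn (thetaPrimeVars m k) k) (∅ : Clause (ℕ ⊕ ℕ)),
      t.size ≤ 7 ^ (k + 1) := by
  have := resTree_blocks (F := ThetaPrime m k ∪ negClausesOn (thetaPrimeVars m k) k ∪
        posClausesOn (thetaPrimeVars m k) k) (thetaPrimeVars m k) k
    (fun i => if m = 3 then vvar m i 0 else zvar m i (m - 3 - 1))
    (fun i => vvar m i (m - 2)) (fun i => vvar m i (m - 1))
    (Sum.elim (fun x => x / m) (fun x => x / m))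
    (fun C hC => Or.inl (Or.inr hC)) ?_ ?_
    (fun i hi => vvar_good m k i _ hi (by omega))
    (fun i hi => vvar_good m k i _ hi (by omega)) (k + 1) ∅ (by simp) (by simp) (by simp)
  · simpa using this
  · intro i hi
    refine Or.inl (Or.inl ⟨i, m - 3, hi, by omega, ?_⟩)
    by_cases h : m = 3
    · subst h
      ext x; simp
    · have h0 : m - 3 ≠ 0 := by omega
      have h1 : m - 3 + 1 = m - 2 := by omega
      simp only [h, h0, h1, if_true, if_false]
      ext x; simp
  · intro i hi
    by_cases h : m = 3
    · simp only [h, if_true]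
      exact vvar_good 3 k i 0 hi (by omega)
    · simp only [h, if_false]
      exact zvar_good m k i _ hi (by omega)
end

section
/- Consider the substitution that maps each literal of Ψ'_{n,k} as follows: x_i ↦ ¬c_2 (and ¬x_i ↦ c_2), r_{x_i,j} ↦ p_{i,j}, and s_{x_i,j} ↦ q_{i,j}. Every clause of Ψ'_{n,k}, after this substitution, either is a clause of P_{n,k} or is derivable from clauses of P_{n,k} by a single resolution step (a resolution with the clause c_1 ∨ c_2), possibly followed by weakenings. Consequently, if Ψ'_{n,k} has a Resolution refutation of size S, then P_{n,k} has a Resolution refutation of size at most S plus a number of steps linear in the number of clauses of Ψ'_{n,k}. -/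
/-- Variables of the embedded CNF: original variables `x_i`, pigeonhole variables
`r_{x_i,j}` and `s_{x_i,j}`. -/
abbrev EV : Type := ℕ ⊕ (ℕ × ℕ ⊕ ℕ × ℕ)

def xvar (i : ℕ) : EV := Sum.inl i
def rvar (i j : ℕ) : EV := Sum.inr (Sum.inl (i, j))
def svar (i j : ℕ) : EV := Sum.inr (Sum.inr (i, j))

/-- The embedded CNF `Φ'` of `(Φ, k)` (for `Φ` a CNF in the variables `x_0, …, x_{n-1}`):
`Φ` together with the pigeonhole clauses
`¬x_i ∨ r_{x_i,1} ∨ ⋯ ∨ r_{x_i,k}`, `¬x_i ∨ ¬r_{x_i,j} ∨ ¬r_{x_l,j}` (`i ≠ l`, `j < k`),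
`x_i ∨ s_{x_i,1} ∨ ⋯ ∨ s_{x_i,n-k}`, and `x_i ∨ ¬s_{x_i,j} ∨ ¬s_{x_l,j}` (`i ≠ l`, `j < n-k`). -/
def EmbeddedCNF (Φ : Set (Clause ℕ)) (n k : ℕ) : Set (Clause EV) :=
  {C | ∃ D ∈ Φ, C = D.image (fun l => (xvar l.1, l.2))} ∪
  {C | ∃ i, i < n ∧
    C = insert (xvar i, false) ((Finset.range k).image (fun j => (rvar i j, true)))} ∪
  {C | ∃ i l j, i < n ∧ l < n ∧ i ≠ l ∧ j < k ∧
    C = {(xvar i, false), (rvar i j, false), (rvar l j, false)}} ∪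
  {C | ∃ i, i < n ∧
    C = insert (xvar i, true) ((Finset.range (n - k)).image (fun j => (svar i j, true)))} ∪
  {C | ∃ i l j, i < n ∧ l < n ∧ i ≠ l ∧ j < n - k ∧
    C = {(xvar i, true), (svar i j, false), (svar l j, false)}}
/-- Variables of the CNF `P_{n,k}`: `c_1`, `c_2`, `p_{i,j}` and `q_{i,j}`. -/
abbrev PV : Type := Bool ⊕ (ℕ × ℕ ⊕ ℕ × ℕ)

def c1var : PV := Sum.inl true
def c2var : PV := Sum.inl false
def pvar (i j : ℕ) : PV := Sum.inr (Sum.inl (i, j))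
def qvar (i j : ℕ) : PV := Sum.inr (Sum.inr (i, j))

/-- The CNF `P_{n,k}`, with clauses `¬c_1 ∨ ¬c_2`, `c_1 ∨ c_2` (expressing `¬c_1 ↔ c_2`),
`¬c_1 ∨ ¬p_{i,j} ∨ ¬p_{l,j}` (`i ≠ l ∈ [n]`, `j ∈ [k]`), `¬c_1 ∨ p_{i,1} ∨ ⋯ ∨ p_{i,k}`,
`¬c_2 ∨ ¬q_{i,j} ∨ ¬q_{l,j}` (`i ≠ l ∈ [n]`, `j ∈ [n-k]`), and
`¬c_2 ∨ q_{i,1} ∨ ⋯ ∨ q_{i,n-k}`. -/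
def Pnk (n k : ℕ) : Set (Clause PV) :=
  {({(c1var, false), (c2var, false)} : Clause PV), ({(c1var, true), (c2var, true)} : Clause PV)} ∪
  {C | ∃ i l j, i < n ∧ l < n ∧ i ≠ l ∧ j < k ∧
    C = {(c1var, false), (pvar i j, false), (pvar l j, false)}} ∪
  {C | ∃ i, i < n ∧
    C = insert (c1var, false) ((Finset.range k).image (fun j => (pvar i j, true)))} ∪
  {C | ∃ i l j, i < n ∧ l < n ∧ i ≠ l ∧ j < n - k ∧
    C = {(c2var, false), (qvar i j, false), (qvar l j, false)}} ∪
  {C | ∃ i, i < n ∧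
    C = insert (c2var, false) ((Finset.range (n - k)).image (fun j => (qvar i j, true)))}

/-- `PHP_{m,n}`: the negation of the pigeonhole principle from `m` pigeons to `n` holes,
in variables `p_{i,j}` (`i ∈ [m]`, `j ∈ [n]`), with clauses `¬p_{i,j} ∨ ¬p_{l,j}` and
`p_{i,1} ∨ ⋯ ∨ p_{i,n}`. -/
def PHP (m n : ℕ) : Set (Clause (ℕ × ℕ)) :=
  {C | ∃ i l j, i < m ∧ l < m ∧ i ≠ l ∧ j < n ∧ C = {((i, j), false), ((l, j), false)}} ∪
  {C | ∃ i, i < m ∧ C = (Finset.range n).image (fun j => ((i, j), true))}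

/-- The substitution on literals of `Ψ'_{n,k}`: `x_i ↦ ¬c_2` (so `¬x_i ↦ c_2`),
`r_{x_i,j} ↦ p_{i,j}`, and `s_{x_i,j} ↦ q_{i,j}`. -/
def subLit : EV × Bool → PV × Bool
  | (Sum.inl _, b) => (c2var, !b)
  | (Sum.inr (Sum.inl (i, j)), b) => (pvar i j, b)
  | (Sum.inr (Sum.inr (i, j)), b) => (qvar i j, b)

/-- The substitution applied to a clause. -/
def subClause (C : Clause EV) : Clause PV := C.image subLit

/-- `C` is an axiom or follows by one inference from clauses of the list `L`. -/
def Justified {V : Type} [DecidableEq V] (F : Set (Clause V)) (L : List (Clause V))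
    (C : Clause V) : Prop :=
  C ∈ F ∨
  (∃ (x : V) (P Q : Clause V), insert (x, true) P ∈ L ∧ insert (x, false) Q ∈ L ∧ C = P ∪ Q) ∨
  (∃ D ∈ L, ∃ lit : V × Bool, C = insert lit D)

/-- Lists of clauses that are Resolution derivations. -/
inductive GoodList {V : Type} [DecidableEq V] (F : Set (Clause V)) : List (Clause V) → Prop where
  | nil : GoodList F []
  | snoc (L : List (Clause V)) (C : Clause V) (h : GoodList F L) (hj : Justified F L C) :
      GoodList F (L ++ [C])

theorem GoodList.valid {V : Type} [DecidableEq V] {F : Set (Clause V)} {L : List (Clause V)}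
    (h : GoodList F L) : ∀ i (hi : i < L.length),
    (L[i]'hi ∈ F) ∨
    (∃ (j l : ℕ) (hj : j < i) (hl : l < i) (x : V) (P Q : Clause V),
      L[j]'(hj.trans hi) = insert (x, true) P ∧
      L[l]'(hl.trans hi) = insert (x, false) Q ∧
      L[i]'hi = P ∪ Q) ∨
    (∃ (j : ℕ) (hj : j < i) (lit : V × Bool),
      L[i]'hi = insert lit (L[j]'(hj.trans hi))) := by
  induction h with
  | nil => intro i hi; simp at hi
  | snoc L C h hj ih =>
    intro i hi
    by_cases hlt : i < L.length
    · rcases ih i hlt with h1 | ⟨j, l, hj', hl', x, P, Q, h1, h2, h3⟩ | ⟨j, hj', lit, h1⟩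
      · left; rwa [List.getElem_append_left hlt]
      · right; left
        refine ⟨j, l, hj', hl', x, P, Q, ?_, ?_, ?_⟩
        · rwa [List.getElem_append_left (hj'.trans hlt)]
        · rwa [List.getElem_append_left (hl'.trans hlt)]
        · rwa [List.getElem_append_left hlt]
      · right; right
        refine ⟨j, hj', lit, ?_⟩
        rwa [List.getElem_append_left hlt, List.getElem_append_left (hj'.trans hlt)]
    · have hi' : i = L.length := by
        simp at hi; omega
      subst hi'
      have hC : (L ++ [C])[L.length]'hi = C := by simp
      rw [hC]
      rcases hj with h1 | ⟨x, P, Q, h1, h2, h3⟩ | ⟨D, h1, lit, h2⟩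
      · exact Or.inl h1
      · right; left
        obtain ⟨j, hj, e1⟩ := List.getElem_of_mem h1
        obtain ⟨l, hl, e2⟩ := List.getElem_of_mem h2
        refine ⟨j, l, hj, hl, x, P, Q, ?_, ?_, h3⟩
        · rwa [List.getElem_append_left hj]
        · rwa [List.getElem_append_left hl]
      · right; right
        obtain ⟨j, hj, e1⟩ := List.getElem_of_mem h1
        refine ⟨j, hj, lit, ?_⟩
        rw [List.getElem_append_left hj, e1, h2]

theorem subClause_insert (l : EV × Bool) (P : Clause EV) :
    subClause (insert l P) = insert (subLit l) (subClause P) := by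
  simp [subClause, Finset.image_insert]

theorem subClause_union (P Q : Clause EV) :
    subClause (P ∪ Q) = subClause P ∪ subClause Q := by
  simp [subClause, Finset.image_union]

/-- Classification of the substituted axioms. -/
theorem sub_embedded_clause (n k : ℕ) (C : Clause EV) (hC : C ∈ EmbeddedCNF (Psi n) n k) :
    subClause C ∈ Pnk n k ∨
    ∃ E : Clause PV, insert (c1var, false) E ∈ Pnk n k ∧
      subClause C = {(c2var, true)} ∪ E := by
  rcases hC with (((⟨D, ⟨i, hi, hD⟩, rfl⟩ | ⟨i, hi, rfl⟩) | ⟨i, l, j, hi, hl, hil, hj, rfl⟩) |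
    ⟨i, hi, rfl⟩) | ⟨i, l, j, hi, hl, hil, hj, rfl⟩
  · right
    refine ⟨{(c2var, false)}, ?_, ?_⟩
    · simp [Pnk]
    · rcases hD with rfl | rfl
      · simp [subClause, xvar, subLit, Finset.image_insert, Finset.pair_comm]
        try rfl
      · simp [subClause, xvar, subLit, Finset.image_insert, Finset.pair_comm]
        try rfl
  · right
    refine ⟨(Finset.range k).image (fun j => (pvar i j, true)), ?_, ?_⟩
    · exact Or.inl (Or.inl (Or.inr ⟨i, hi, rfl⟩))
    · rw [subClause_insert]
      simp only [subClause, Finset.image_image]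
      rfl
  · right
    refine ⟨{(pvar i j, false), (pvar l j, false)}, ?_, ?_⟩
    · exact Or.inl (Or.inl (Or.inl (Or.inr ⟨i, l, j, hi, hl, hil, hj, rfl⟩)))
    · rw [subClause_insert, subClause_insert]
      rfl
  · left
    refine Or.inr ⟨i, hi, ?_⟩
    rw [subClause_insert]
    simp only [subClause, Finset.image_image]
    rfl
  · left
    refine Or.inl (Or.inr ⟨i, l, j, hi, hl, hil, hj, ?_⟩)
    rw [subClause_insert, subClause_insert]
    rfl

theorem embedded_clause_nonempty (n k : ℕ) (C : Clause EV) (hC : C ∈ EmbeddedCNF (Psi n) n k) :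
    C.Nonempty := by
  rcases hC with (((⟨D, ⟨i, hi, hD⟩, rfl⟩ | ⟨i, hi, rfl⟩) | ⟨i, l, j, hi, hl, hil, hj, rfl⟩) |
    ⟨i, hi, rfl⟩) | ⟨i, l, j, hi, hl, hil, hj, rfl⟩
  · rcases hD with rfl | rfl <;> simp
  all_goals simp

theorem embedded_finite (n k : ℕ) : (EmbeddedCNF (Psi n) n k).Finite := by
  generalize hW : ((Finset.range n).image xvar ∪
      ((Finset.range n ×ˢ Finset.range k).image (fun p => rvar p.1 p.2)) ∪
      ((Finset.range n ×ˢ Finset.range (n - k)).image (fun p => svar p.1 p.2)) : Finset EV) = W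
  have hx : ∀ i, i < n → xvar i ∈ W := by
    intro i hi
    rw [← hW]
    exact Finset.mem_union_left _ (Finset.mem_union_left _
      (Finset.mem_image_of_mem _ (Finset.mem_range.2 hi)))
  have hr : ∀ i j, i < n → j < k → rvar i j ∈ W := by
    intro i j hi hj
    rw [← hW]
    exact Finset.mem_union_left _ (Finset.mem_union_right _
      (Finset.mem_image.2 ⟨(i, j), by simp [hi, hj], rfl⟩))
  have hs : ∀ i j, i < n → j < n - k → svar i j ∈ W := by
    intro i j hi hj
    rw [← hW]
    exact Finset.mem_union_right _ (Finset.mem_image.2 ⟨(i, j), by simp [hi]; omega, rfl⟩)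
  refine Set.Finite.subset (Finset.finite_toSet (W ×ˢ (Finset.univ : Finset Bool)).powerset) ?_
  intro C hC
  rw [Finset.mem_coe, Finset.mem_powerset]
  suffices h : ∀ l ∈ C, l.1 ∈ W by
    intro l hl
    simp [h l hl]
  rcases hC with (((⟨D, ⟨i, hi, hD⟩, rfl⟩ | ⟨i, hi, rfl⟩) | ⟨i, l, j, hi, hl, hil, hj, rfl⟩) |
    ⟨i, hi, rfl⟩) | ⟨i, l, j, hi, hl, hil, hj, rfl⟩
  · intro l hl
    have h2 : 2 * i < n := by omega
    rcases hD with rfl | rfl <;>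
    · simp at hl
      rcases hl with rfl | rfl
      · exact hx _ (by assumption)
      · exact hx _ (by assumption)
  · intro l hl
    simp at hl
    rcases hl with rfl | ⟨j, hj, rfl⟩
    · exact hx _ hi
    · exact hr _ _ hi hj
  · intro m hm
    simp at hm
    rcases hm with rfl | rfl | rfl
    · exact hx _ hi
    · exact hr _ _ hi hj
    · exact hr _ _ hl hj
  · intro l hl
    simp only [Finset.mem_insert, Finset.mem_image, Finset.mem_range] at hl
    rcases hl with rfl | ⟨j, hj, rfl⟩
    · exact hx _ hi
    · exact hs _ _ hi hj
  · intro m hm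
    simp at hm
    rcases hm with rfl | rfl | rfl
    · exact hx _ hi
    · exact hs _ _ hi hj
    · exact hs _ _ hl hj

/-- A derivation of all substituted axioms of a list. -/
theorem exists_prefix (n k : ℕ) (A : List (Clause EV))
    (hA : ∀ C ∈ A, C ∈ EmbeddedCNF (Psi n) n k) :
    ∃ L : List (Clause PV), GoodList (Pnk n k) L ∧ L.length ≤ 3 * A.length ∧
      ∀ C ∈ A, subClause C ∈ L := by
  induction A with
  | nil => exact ⟨[], GoodList.nil, by simp, by simp⟩
  | cons C A ih =>
    obtain ⟨L, hL, hlen, hmem⟩ := ih (fun D hD => hA D (List.mem_cons_of_mem _ hD))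
    rcases sub_embedded_clause n k C (hA C List.mem_cons_self) with h | ⟨E, hE, hsub⟩
    · refine ⟨L ++ [subClause C], hL.snoc _ _ (Or.inl h), by simp; omega, ?_⟩
      intro D hD
      rcases List.mem_cons.1 hD with rfl | hD
      · simp
      · simp [hmem D hD]
    · have h1 := hL.snoc _ ({(c1var, true), (c2var, true)} : Clause PV)
        (Or.inl (by simp [Pnk]))
      have h2 := h1.snoc _ (insert (c1var, false) E) (Or.inl hE)
      have h3 := h2.snoc _ (subClause C)
        (Or.inr (Or.inl ⟨c1var, {(c2var, true)}, E, by simp, by simp, hsub⟩))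
      refine ⟨_, h3, by simp; omega, ?_⟩
      intro D hD
      rcases List.mem_cons.1 hD with rfl | hD
      · simp
      · simp [hmem D hD]

/-- The substitution preserves inferences. -/
theorem sub_resolve (F : Set (Clause PV)) (L : List (Clause PV)) (x : EV) (P Q : Clause EV)
    (h1 : subClause (insert (x, true) P) ∈ L) (h2 : subClause (insert (x, false) Q) ∈ L) :
    Justified F L (subClause (P ∪ Q)) := by
  rw [subClause_insert] at h1 h2
  rw [subClause_union]
  right; left
  rcases x with i | ⟨i, j⟩ | ⟨i, j⟩
  · exact ⟨c2var, subClause Q, subClause P, h2, h1, Finset.union_comm _ _⟩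
  · exact ⟨pvar i j, subClause P, subClause Q, h1, h2, rfl⟩
  · exact ⟨qvar i j, subClause P, subClause Q, h1, h2, rfl⟩

theorem good_simulation (n k : ℕ) (π : ResRefutation (EmbeddedCNF (Psi n) n k))
    (L : List (Clause PV)) (hL : GoodList (Pnk n k) L)
    (hmem : ∀ C ∈ EmbeddedCNF (Psi n) n k, subClause C ∈ L) (i : ℕ) (hi : i ≤ π.seq.length) :
    GoodList (Pnk n k) (L ++ (π.seq.take i).map subClause) := by
  induction i with
  | zero => simpa using hL
  | succ i ih =>
    have hi' : i < π.seq.length := hi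
    have e : L ++ (π.seq.take (i + 1)).map subClause =
        (L ++ (π.seq.take i).map subClause) ++ [subClause (π.seq[i]'hi')] := by
      rw [List.take_succ_eq_append_getElem hi', List.map_append, List.append_assoc]
      rfl
    rw [e]
    refine (ih hi'.le).snoc _ _ ?_
    have hprev : ∀ j (hj : j < i), subClause (π.seq[j]'(hj.trans hi')) ∈
        L ++ (π.seq.take i).map subClause := by
      intro j hj
      refine List.mem_append_right _ (List.mem_map_of_mem ?_)
      rw [List.mem_take_iff_getElem]
      exact ⟨j, by omega, rfl⟩
    rcases π.valid i hi' with h | ⟨j, l, hj, hl, x, P, Q, h1, h2, h3⟩ | ⟨j, hj, lit, h1⟩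
    · right; right
      obtain ⟨a, ha⟩ := embedded_clause_nonempty n k _ h
      refine ⟨_, List.mem_append_left _ (hmem _ h), subLit a, ?_⟩
      exact (Finset.insert_eq_of_mem (Finset.mem_image_of_mem _ ha)).symm
    · rw [h3]
      refine sub_resolve _ _ x P Q ?_ ?_
      · rw [← h1]; exact hprev j hj
      · rw [← h2]; exact hprev l hl
    · right; right
      refine ⟨_, hprev j hj, subLit lit, ?_⟩
      rw [h1, subClause_insert]

/-- every clause of `Ψ'_{n,k}`, after the substitution `x_i ↦ ¬c_2`,
`r_{x_i,j} ↦ p_{i,j}`, `s_{x_i,j} ↦ q_{i,j}`, either is a clause of `P_{n,k}` or is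
derivable from clauses of `P_{n,k}` by a single resolution step with the clause
`c_1 ∨ c_2` (possibly followed by weakenings). Consequently, there is a constant `c`
such that if `Ψ'_{n,k}` has a Resolution refutation of size `S`, then `P_{n,k}` has a
Resolution refutation of size at most `S` plus `c` times the number of clauses of
`Ψ'_{n,k}`. -/
theorem substituted_embedded_psi_clauses_derivable :
    (∀ (n k : ℕ), Odd k → Even n → k ≤ n →
      ∀ C ∈ EmbeddedCNF (Psi n) n k,
        subClause C ∈ Pnk n k ∨
        ∃ D ∈ Pnk n k, ∃ E : Clause PV, D = insert (c1var, false) E ∧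
          E ∪ ({(c2var, true)} : Clause PV) ⊆ subClause C) ∧
    (∃ c : ℕ, ∀ (n k : ℕ), Odd k → Even n → k ≤ n →
      ∀ π : ResRefutation (EmbeddedCNF (Psi n) n k),
        ∃ π' : ResRefutation (Pnk n k),
          π'.size ≤ π.size + c * (EmbeddedCNF (Psi n) n k).ncard) := by
  refine ⟨?_, 3, ?_⟩
  · intro n k _ _ _ C hC
    rcases sub_embedded_clause n k C hC with h | ⟨E, hE, hsub⟩
    · exact Or.inl h
    · exact Or.inr ⟨_, hE, E, rfl, by rw [hsub, Finset.union_comm]⟩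
  · intro n k _ _ _ π
    have hfin := embedded_finite n k
    obtain ⟨L, hL, hlen, hmem⟩ := exists_prefix n k hfin.toFinset.toList (by simp)
    have hG := good_simulation n k π L hL (fun C hC => hmem C (by simpa using hC))
      π.seq.length le_rfl
    rw [List.take_length] at hG
    have hne : π.seq.map subClause ≠ [] := by simpa using π.ne
    refine ⟨⟨L ++ π.seq.map subClause, by simp [π.ne], ?_, hG.valid⟩, ?_⟩
    · rw [List.getLast_append_of_ne_nil _ hne, List.getLast_map, π.lastEmpty]
      rfl
    · rw [Set.ncard_eq_toFinset_card _ hfin]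
      rw [Finset.length_toList] at hlen
      simp only [ResRefutation.size, List.length_append, List.length_map]
      omega
end
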